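/- The eight-vertex deformed double Yangian R-matrix R_{V8}(β;r) (unnormalized, entries a,b,c,d as above with x=iβ/2r, y=π/2r: a=cos x cos y/cos(x+y), b=sin x cos y/sin(x+y), c=cos x sin y/sin(x+y), d=−sin x sin y/cos(x+y)) satisfies the additive Yang–Baxter equation R₁₂(β)R₁₃(β+β')R₂₃(β') = R₂₃(β')R₁₃(β+β')R₁₂(β). -/

import Mathlib

open Matrix

/-- Encoding of a pair of indices of `Fin 2` into `Fin 4`, basis ordering (11,12,21,22). -/
def enc (a b : Fin 2) : Fin 4 := ⟨2 * a.val + b.val, by have := a.isLt; have := b.isLt; omega⟩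

/-- Action of a matrix on legs 1,2 of the triple tensor product. -/
def L12 {K : Type*} [Field K] (M : Matrix (Fin 4) (Fin 4) K) :
    Matrix (Fin 2 × Fin 2 × Fin 2) (Fin 2 × Fin 2 × Fin 2) K :=
  Matrix.of fun p q =>
    M (enc p.1 p.2.1) (enc q.1 q.2.1) * (if p.2.2 = q.2.2 then 1 else 0)

/-- Action of a matrix on legs 2,3 of the triple tensor product. -/
def L23 {K : Type*} [Field K] (M : Matrix (Fin 4) (Fin 4) K) :
    Matrix (Fin 2 × Fin 2 × Fin 2) (Fin 2 × Fin 2 × Fin 2) K :=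
  Matrix.of fun p q =>
    (if p.1 = q.1 then 1 else 0) * M (enc p.2.1 p.2.2) (enc q.2.1 q.2.2)

/-- Action of a matrix on legs 1,3 of the triple tensor product. -/
def L13 {K : Type*} [Field K] (M : Matrix (Fin 4) (Fin 4) K) :
    Matrix (Fin 2 × Fin 2 × Fin 2) (Fin 2 × Fin 2 × Fin 2) K :=
  Matrix.of fun p q =>
    M (enc p.1 p.2.2) (enc q.1 q.2.2) * (if p.2.1 = q.2.1 then 1 else 0)


/-- The unnormalized eight-vertex deformed double Yangian R-matrix `R_{V8}`, written in
the variables `sx = sin x`, `cx = cos x`, `sy = sin y`, `cy = cos y` with `x = iβ/2r`,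
`y = π/2r`: entries `a = cos x cos y/cos(x+y)`, `d = −sin x sin y/cos(x+y)`,
`b = sin x cos y/sin(x+y)`, `c = cos x sin y/sin(x+y)`. -/
def RV8 {K : Type*} [Field K] (sx cx sy cy : K) : Matrix (Fin 4) (Fin 4) K :=
  !![cx * cy / (cx * cy - sx * sy), 0, 0, -(sx * sy) / (cx * cy - sx * sy);
     0, sx * cy / (sx * cy + cx * sy), cx * sy / (sx * cy + cx * sy), 0;
     0, cx * sy / (sx * cy + cx * sy), sx * cy / (sx * cy + cx * sy), 0;
     -(sx * sy) / (cx * cy - sx * sy), 0, 0, cx * cy / (cx * cy - sx * sy)]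

/-!
The R-matrix is homogeneous of degree zero in each pair `(sin, cos)`, so it suffices to work with
formal pairs that are composed by the addition formulas.

The three factors are symmetric matrices, so the two sides of the Yang–Baxter equation are
transposes of each other. The factors preserve the parity of the number of indices equal to `2` and
commute with the simultaneous exchange `1 ↔ 2` on all legs; what remains is the symmetry of one
`4 × 4` block, i.e. one scalar equation for each of its six off-diagonal pairs of entries. With
`z = x + x'`, the formulas for `f(z) g(x + y) h(x' + y)`, where `f`, `g`, `h` are sines and cosines,
reduce both sides of each equation to the same product: for instance both sides of `flip₁₃` equal
`sin y cos y cos² z / (sin (z + y) cos (z + y))`.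
-/

/-- A formal angle, given by its sine and cosine, as argument of the weights of the R-matrix.
Angles are added by the addition formulas; `sin ^ 2 + cos ^ 2 = 1` is not imposed. -/
structure TrigPair (R : Type*) where
  sin : R
  cos : R

namespace TrigPair

variable {R : Type*} [CommRing R]

instance : Add (TrigPair R) where
  add x y := ⟨x.sin * y.cos + x.cos * y.sin, x.cos * y.cos - x.sin * y.sin⟩

theorem sin_add (x y : TrigPair R) : (x + y).sin = x.sin * y.cos + x.cos * y.sin := rfl

theorem cos_add (x y : TrigPair R) : (x + y).cos = x.cos * y.cos - x.sin * y.sin := rfl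

theorem cos_add_mul_cos_add_mul_cos_add (x x' y : TrigPair R) :
    (x + x').cos * (x + y).cos * (x' + y).cos =
      x.cos * x'.cos * y.cos * (x + x' + y).cos + x.sin * x'.sin * y.sin * (x + x' + y).sin := by
  simp only [sin_add, cos_add]
  ring

theorem cos_add_mul_sin_add_mul_sin_add (x x' y : TrigPair R) :
    (x + x').cos * (x + y).sin * (x' + y).sin =
      x.cos * x'.cos * y.sin * (x + x' + y).sin + x.sin * x'.sin * y.cos * (x + x' + y).cos := by
  simp only [sin_add, cos_add]
  ring

theorem sin_add_mul_cos_add_mul_sin_add (x x' y : TrigPair R) :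
    (x + x').sin * (x + y).cos * (x' + y).sin =
      x.cos * x'.sin * y.cos * (x + x' + y).sin + x.sin * x'.cos * y.sin * (x + x' + y).cos := by
  simp only [sin_add, cos_add]
  ring

theorem sin_add_mul_sin_add_mul_cos_add (x x' y : TrigPair R) :
    (x + x').sin * (x + y).sin * (x' + y).cos =
      x.sin * x'.cos * y.cos * (x + x' + y).sin + x.cos * x'.sin * y.sin * (x + x' + y).cos := by
  simp only [sin_add, cos_add]
  ring

end TrigPair

section Legs

variable {K : Type*} [Field K]

theorem transpose_L12 (M : Matrix (Fin 4) (Fin 4) K) : (L12 M)ᵀ = L12 Mᵀ := by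
  ext p q
  simp [L12, eq_comm]

theorem transpose_L13 (M : Matrix (Fin 4) (Fin 4) K) : (L13 M)ᵀ = L13 Mᵀ := by
  ext p q
  simp [L13, eq_comm]

theorem transpose_L23 (M : Matrix (Fin 4) (Fin 4) K) : (L23 M)ᵀ = L23 Mᵀ := by
  ext p q
  simp [L23, eq_comm]

theorem L12_mul_L13_mul_L23_apply (A B C : Matrix (Fin 4) (Fin 4) K) (i j k l m n : Fin 2) :
    (L12 A * L13 B * L23 C) (i, j, k) (l, m, n) =
      ∑ q, ∑ r, ∑ p, A (enc i j) (enc p q) * B (enc p k) (enc l r) * C (enc q r) (enc m n) := by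
  simp [Matrix.mul_apply, Fintype.sum_prod_type, L12, L13, L23, Finset.sum_mul, -Fin.sum_univ_two]

theorem yangBaxter_iff_isSymm {A B C : Matrix (Fin 4) (Fin 4) K}
    (hA : A.IsSymm) (hB : B.IsSymm) (hC : C.IsSymm) :
    L12 A * L13 B * L23 C = L23 C * L13 B * L12 A ↔ (L12 A * L13 B * L23 C).IsSymm := by
  rw [Matrix.IsSymm, eq_comm]
  simp only [transpose_mul, transpose_L12, transpose_L13, transpose_L23, hA.eq, hB.eq, hC.eq,
    Matrix.mul_assoc]

end Legs

/-- The Boltzmann weights of the symmetric (zero-field) eight-vertex model, in Baxter's notation. -/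
structure EightVertexWeights (R : Type*) where
  a : R
  b : R
  c : R
  d : R

namespace EightVertexWeights

/-- The R-matrix with the given weights, in the basis ordering (11,12,21,22) of `enc`. -/
def toMatrix {R : Type*} [Zero R] (w : EightVertexWeights R) : Matrix (Fin 4) (Fin 4) R :=
  !![w.a, 0, 0, w.d;
     0, w.b, w.c, 0;
     0, w.c, w.b, 0;
     w.d, 0, 0, w.a]

/-- Baxter's star-triangle relations, the scalar form of the Yang–Baxter equation, for weights `u`,
`v`, `w` on legs 12, 13 and 23. The two relations `flipᵢⱼ`, `flipᵢⱼ'` compare the matrix entries of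
the two sides between basis vectors that differ exactly on the legs `i` and `j`. -/
structure StarTriangle {R : Type*} [Add R] [Mul R] (u v w : EightVertexWeights R) : Prop where
  flip₁₂ : u.a * v.c * w.d + u.d * v.a * w.a = u.d * v.b * w.b + u.a * v.d * w.c
  flip₁₂' : u.b * v.c * w.c + u.c * v.a * w.b = u.b * v.d * w.d + u.c * v.b * w.a
  flip₁₃ : u.a * v.c * w.a + u.d * v.a * w.d = u.c * v.a * w.c + u.b * v.c * w.b
  flip₁₃' : u.a * v.d * w.b + u.d * v.b * w.c = u.c * v.b * w.d + u.b * v.d * w.a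
  flip₂₃ : u.a * v.a * w.d + u.d * v.c * w.a = u.b * v.b * w.d + u.c * v.d * w.a
  flip₂₃' : u.a * v.b * w.c + u.d * v.d * w.b = u.b * v.a * w.c + u.c * v.c * w.b

theorem isSymm_toMatrix {R : Type*} [Zero R] (w : EightVertexWeights R) : w.toMatrix.IsSymm := by
  ext i j
  fin_cases i <;> fin_cases j <;> rfl

theorem toMatrix_enc {R : Type*} [Zero R] (w : EightVertexWeights R) (i j k l : Fin 2) :
    w.toMatrix (enc i j) (enc k l) =
      if i + j = k + l then
        if i = j then if i = k then w.a else w.d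
        else if i = k then w.b else w.c
      else 0 := by
  fin_cases i <;> fin_cases j <;> fin_cases k <;> fin_cases l <;> rfl

theorem StarTriangle.yangBaxter {K : Type*} [Field K] {u v w : EightVertexWeights K}
    (h : StarTriangle u v w) :
    L12 u.toMatrix * L13 v.toMatrix * L23 w.toMatrix =
      L23 w.toMatrix * L13 v.toMatrix * L12 u.toMatrix := by
  rw [yangBaxter_iff_isSymm u.isSymm_toMatrix v.isSymm_toMatrix w.isSymm_toMatrix]
  obtain ⟨h₁₂, h₁₂', h₁₃, h₁₃', h₂₃, h₂₃'⟩ := h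
  refine Matrix.IsSymm.ext fun ⟨i, j, k⟩ ⟨l, m, n⟩ ↦ ?_
  simp only [L12_mul_L13_mul_L23_apply, toMatrix_enc, Fin.sum_univ_two]
  fin_cases i <;> fin_cases j <;> fin_cases k <;> fin_cases l <;> fin_cases m <;> fin_cases n <;>
    simp only [Fin.zero_eta, Fin.mk_one, Fin.isValue, Fin.reduceAdd, zero_add, add_zero, mul_zero,
      zero_mul, zero_ne_one, one_ne_zero, if_true, if_false] <;> grind only

/-- The weights of the eight-vertex deformed double Yangian R-matrix `R_{V8}`, with `x` the spectral
parameter `iβ/2r` and `y` the constant `π/2r`. -/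
def ofAngles {K : Type*} [Field K] (x y : TrigPair K) : EightVertexWeights K where
  a := x.cos * y.cos / (x + y).cos
  b := x.sin * y.cos / (x + y).sin
  c := x.cos * y.sin / (x + y).sin
  d := -(x.sin * y.sin) / (x + y).cos

theorem toMatrix_ofAngles {K : Type*} [Field K] (x y : TrigPair K) :
    (ofAngles x y).toMatrix = RV8 x.sin x.cos y.sin y.cos := rfl

theorem starTriangle_ofAngles {K : Type*} [Field K] {x x' y : TrigPair K}
    (hcx : (x + y).cos ≠ 0) (hsx : (x + y).sin ≠ 0)
    (hcx' : (x' + y).cos ≠ 0) (hsx' : (x' + y).sin ≠ 0)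
    (hcz : (x + x' + y).cos ≠ 0) (hsz : (x + x' + y).sin ≠ 0) :
    StarTriangle (ofAngles x y) (ofAngles (x + x') y) (ofAngles x' y) := by
  have ccc := TrigPair.cos_add_mul_cos_add_mul_cos_add x x' y
  have css := TrigPair.cos_add_mul_sin_add_mul_sin_add x x' y
  have scs := TrigPair.sin_add_mul_cos_add_mul_sin_add x x' y
  have ssc := TrigPair.sin_add_mul_sin_add_mul_cos_add x x' y
  constructor <;> simp only [ofAngles] <;> field_simp
  case flip₁₂ =>
    linear_combination y.sin * y.cos * ((x + x').cos * (x' + y).sin * ssc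
      - (x + x').sin * (x' + y).cos * css)
  case flip₁₂' =>
    linear_combination y.sin * y.cos * ((x + x').sin * (x' + y).sin * ccc
      - (x + x').cos * (x' + y).cos * scs)
  case flip₁₃ =>
    linear_combination y.sin * y.cos * (x + x').cos *
      ((x + y).cos * (x' + y).cos * css - (x + y).sin * (x' + y).sin * ccc)
  case flip₁₃' =>
    linear_combination y.sin * y.cos * (x + x').sin *
      ((x + y).sin * (x' + y).cos * scs - (x + y).cos * (x' + y).sin * ssc)
  case flip₂₃ =>
    linear_combination y.sin * y.cos * ((x + x').cos * (x + y).sin * scs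
      - (x + x').sin * (x + y).cos * css)
  case flip₂₃' =>
    linear_combination y.sin * y.cos * ((x + x').cos * (x + y).cos * ssc
      - (x + x').sin * (x + y).sin * ccc)

end EightVertexWeights

theorem stmt9_general {K : Type*} [Field K] (x x' y : TrigPair K)
    (hcx : (x + y).cos ≠ 0) (hsx : (x + y).sin ≠ 0)
    (hcx' : (x' + y).cos ≠ 0) (hsx' : (x' + y).sin ≠ 0)
    (hcz : (x + x' + y).cos ≠ 0) (hsz : (x + x' + y).sin ≠ 0) :
    L12 (RV8 x.sin x.cos y.sin y.cos) *
        L13 (RV8 (x + x').sin (x + x').cos y.sin y.cos) *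
        L23 (RV8 x'.sin x'.cos y.sin y.cos) =
      L23 (RV8 x'.sin x'.cos y.sin y.cos) *
        L13 (RV8 (x + x').sin (x + x').cos y.sin y.cos) *
        L12 (RV8 x.sin x.cos y.sin y.cos) := by
  simp only [← EightVertexWeights.toMatrix_ofAngles]
  exact (EightVertexWeights.starTriangle_ofAngles hcx hsx hcx' hsx' hcz hsz).yangBaxter

/-- The additive Yang–Baxter equation `R₁₂(β)R₁₃(β+β')R₂₃(β') = R₂₃(β')R₁₃(β+β')R₁₂(β)`
for the eight-vertex deformed double Yangian R-matrix; additivity in `β` means the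
`x`-variables add, so leg 13 carries `sin(x+x') = sx·cx' + cx·sx'`,
`cos(x+x') = cx·cx' − sx·sx'`. -/
theorem stmt9 {K : Type*} [Field K] (sx cx sx' cx' sy cy : K)
    (hx : sx ^ 2 + cx ^ 2 = 1) (hx' : sx' ^ 2 + cx' ^ 2 = 1) (hy : sy ^ 2 + cy ^ 2 = 1)
    (h1 : cx * cy - sx * sy ≠ 0) (h2 : sx * cy + cx * sy ≠ 0)
    (h3 : cx' * cy - sx' * sy ≠ 0) (h4 : sx' * cy + cx' * sy ≠ 0)
    (h5 : (cx * cx' - sx * sx') * cy - (sx * cx' + cx * sx') * sy ≠ 0)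
    (h6 : (sx * cx' + cx * sx') * cy + (cx * cx' - sx * sx') * sy ≠ 0) :
    L12 (RV8 sx cx sy cy) *
        L13 (RV8 (sx * cx' + cx * sx') (cx * cx' - sx * sx') sy cy) *
        L23 (RV8 sx' cx' sy cy) =
      L23 (RV8 sx' cx' sy cy) *
        L13 (RV8 (sx * cx' + cx * sx') (cx * cx' - sx * sx') sy cy) *
        L12 (RV8 sx cx sy cy) :=
  stmt9_general ⟨sx, cx⟩ ⟨sx', cx'⟩ ⟨sy, cy⟩ h1 h2 h3 h4 h5 h6
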